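/- arXiv:1810.07126 — 3 statements merged into one kernel-verified Lean document; each statement's English description precedes it below -/
import Mathlib

section
/- The set W_d of d×d matrices of pairwise van der Waerden's coefficients ζ(Xi,Xj) = ρ(Φ^{-1}(Fi(Xi)), Φ^{-1}(Fj(Xj))) of d-dimensional random vectors X with continuous margins Fi coincides with the set P_d of all d×d correlation matrices (symmetric positive semi-definite matrices with unit diagonal); in particular, any P ∈ P_d is attained as the van der Waerden matrix of the multivariate normal distribution with covariance matrix P. -/
open MeasureTheory ProbabilityTheory Set

noncomputable section

/-- The uniform distribution on (0,1). -/
def unif01 : Measure ℝ := volume.restrict (Set.Ioo (0:ℝ) 1)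

/-- Pearson's correlation coefficient of two real random variables. -/
def pearson {Ω : Type*} [MeasurableSpace Ω] (μ : Measure Ω) (Y1 Y2 : Ω → ℝ) : ℝ :=
  ((∫ ω, Y1 ω * Y2 ω ∂μ) - (∫ ω, Y1 ω ∂μ) * (∫ ω, Y2 ω ∂μ)) /
    Real.sqrt (variance Y1 μ * variance Y2 μ)

/-- The distribution function (CDF) of a measure on ℝ. -/
def cdfOf (ν : Measure ℝ) : ℝ → ℝ := fun x => (ν (Set.Iic x)).toReal

/-- The quantile function (generalized inverse) of a distribution function. -/
def quantileFn (G : ℝ → ℝ) (p : ℝ) : ℝ := sInf {x : ℝ | p ≤ G x}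

/-- A distribution on ℝ is symmetric (about some point `m`). -/
def SymmetricDist (G : Measure ℝ) : Prop :=
  ∃ m : ℝ, G.map (fun x => 2 * m - x) = G

/-- A distribution on ℝ is non-degenerate: it is not a point mass. -/
def Nondegenerate (G : Measure ℝ) : Prop := ∀ c : ℝ, G ≠ Measure.dirac c

/-- A distribution is concordance inducing: non-degenerate, symmetric,
with finite second moment. -/
def ConcordanceInducing (G : Measure ℝ) : Prop :=
  Nondegenerate G ∧ SymmetricDist G ∧ Integrable (fun x : ℝ => x ^ 2) G

/-- `corrSet ν d` is the set of `d×d` Pearson correlation matrices of random vectors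
all of whose margins have distribution `ν`. -/
def corrSet (ν : Measure ℝ) (d : ℕ) : Set (Matrix (Fin d) (Fin d) ℝ) :=
  {P | ∃ μ : Measure (Fin d → ℝ), IsProbabilityMeasure μ ∧
        (∀ j, μ.map (fun x => x j) = ν) ∧
        (∀ i j, P i j = pearson μ (fun x => x i) (fun x => x j))}

/-- The Bernoulli distribution `Bern(p)` on ℝ. -/
def bern (p : ℝ) : Measure ℝ :=
  ENNReal.ofReal p • Measure.dirac (1:ℝ) + ENNReal.ofReal (1 - p) • Measure.dirac (0:ℝ)

/-- The set of `d×d` correlation matrices of random vectors with `Bern(1/2)` margins. -/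
def PBd (d : ℕ) : Set (Matrix (Fin d) (Fin d) ℝ) := corrSet (bern (1/2)) d

/-- The set of all `d×d` correlation matrices: symmetric positive semi-definite
matrices with entries in `[-1,1]` and unit diagonal. -/
def Pd (d : ℕ) : Set (Matrix (Fin d) (Fin d) ℝ) :=
  {P | P.IsSymm ∧ (∀ i j, P i j ∈ Set.Icc (-1:ℝ) 1) ∧ P.PosSemidef ∧ ∀ i, P i i = 1}

/-- The standard normal distribution function Φ. -/
def stdNormalCDF : ℝ → ℝ := cdfOf (gaussianReal 0 1)

/-- The van der Waerden transform of the `i`-th coordinate of a random vector with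
law `μ`: `x ↦ Φ⁻¹(Fi(x i))` where `Fi` is the `i`-th marginal distribution function. -/
def vdWScore (d : ℕ) (μ : Measure (Fin d → ℝ)) (i : Fin d) : (Fin d → ℝ) → ℝ :=
  fun x => quantileFn stdNormalCDF (cdfOf (μ.map fun y => y i) (x i))

/-- The set of `d×d` matrices of pairwise van der Waerden's coefficients
`ζ(Xi,Xj) = ρ(Φ⁻¹(Fi(Xi)), Φ⁻¹(Fj(Xj)))` of random vectors with continuous margins. -/
def Wd (d : ℕ) : Set (Matrix (Fin d) (Fin d) ℝ) :=
  {P | ∃ μ : Measure (Fin d → ℝ), IsProbabilityMeasure μ ∧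
        (∀ j, Continuous (cdfOf (μ.map fun x => x j))) ∧
        (∀ i j, P i j = pearson μ (vdWScore d μ i) (vdWScore d μ j))}

/-!
If `U` is uniform on `(0,1)`, then `F⁻¹(U)` has distribution function `F`, and `F(F⁻¹(U)) = U` when
`F` is continuous; hence `F(X)` is uniform for `X ∼ F`. Van der Waerden scores of a vector with
continuous margins are therefore standard normal, and a matrix of pairwise correlations of square
integrable, non-degenerate variables is positive semi-definite with unit diagonal. Conversely, a
correlation matrix factors as `P = A Aᵀ`, and if `Z` is a standard Gaussian vector, then `A Z` has
standard normal margins. Its scores are `Φ⁻¹(Φ(x i)) = x i`, and their correlations are the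
entries of `P`.
-/

open Matrix

section Quantile

variable (μ ν : Measure ℝ)

lemma quantileFn_apply_of_strictMono {F : ℝ → ℝ} (hF : StrictMono F) (x : ℝ) :
    quantileFn F (F x) = x := by
  simp only [quantileFn, hF.le_iff_le]
  exact csInf_Ici

lemma bddBelow_setOf_le_cdf {p : ℝ} (hp : 0 < p) : BddBelow {x | p ≤ cdf ν x} := by
  obtain ⟨a, ha⟩ := ((tendsto_cdf_atBot ν).eventually_lt_const hp).exists
  exact ⟨a, fun x hx => ((monotone_cdf ν).reflect_lt (ha.trans_le hx)).le⟩

lemma nonempty_setOf_le_cdf {p : ℝ} (hp : p < 1) : {x | p ≤ cdf ν x}.Nonempty :=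
  ((tendsto_cdf_atTop ν).eventually_const_lt hp).exists.imp fun _ => le_of_lt

lemma le_cdf_quantileFn {p : ℝ} (hp : p < 1) : p ≤ cdf ν (quantileFn (cdf ν) p) := by
  refine ge_of_tendsto (((cdf ν).right_continuous _).mono Ioi_subset_Ici_self) ?_
  filter_upwards [self_mem_nhdsWithin] with x hx
  obtain ⟨y, hy, hyx⟩ := exists_lt_of_csInf_lt (nonempty_setOf_le_cdf ν hp) hx
  exact hy.trans (monotone_cdf ν hyx.le)

lemma quantileFn_cdf_le_iff {p : ℝ} (hp : p ∈ Ioo 0 1) (x : ℝ) :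
    quantileFn (cdf ν) p ≤ x ↔ p ≤ cdf ν x :=
  ⟨fun h => (le_cdf_quantileFn ν hp.2).trans (monotone_cdf ν h),
    fun h => csInf_le (bddBelow_setOf_le_cdf ν hp.1) h⟩

lemma monotoneOn_quantileFn_cdf : MonotoneOn (quantileFn (cdf ν)) (Ioo 0 1) := fun _ hp _ hq hpq =>
  (quantileFn_cdf_le_iff ν hp _).2 (hpq.trans (le_cdf_quantileFn ν hq.2))

lemma cdf_quantileFn (hν : Continuous (cdf ν)) {p : ℝ} (hp : p ∈ Ioo 0 1) :
    cdf ν (quantileFn (cdf ν) p) = p := by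
  obtain ⟨x, rfl⟩ : p ∈ range (cdf ν) := mem_range_of_exists_le_of_exists_ge hν
    (((tendsto_cdf_atBot ν).eventually_le_const hp.1).exists)
    (((tendsto_cdf_atTop ν).eventually_const_le hp.2).exists)
  exact (monotone_cdf ν ((quantileFn_cdf_le_iff ν hp x).2 le_rfl)).antisymm
    (le_cdf_quantileFn ν hp.2)

variable [IsProbabilityMeasure μ] [IsProbabilityMeasure ν]

lemma cdfOf_eq_cdf : cdfOf ν = cdf ν :=
  funext fun x => (cdf_eq_real ν x).symm

lemma continuous_cdf [NullSingletonClass ν] : Continuous (cdf ν) := by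
  refine continuous_iff_continuousAt.2 fun x => ?_
  rw [(monotone_cdf ν).continuousAt_iff_leftLim_eq_rightLim, StieltjesFunction.rightLim_eq]
  have jump_eq_zero : ENNReal.ofReal (cdf ν x - Function.leftLim (cdf ν) x) = 0 := by
    rw [← StieltjesFunction.measure_singleton, measure_cdf, measure_singleton]
  exact ((monotone_cdf ν).leftLim_le le_rfl).antisymm
    (sub_nonpos.1 (ENNReal.ofReal_eq_zero.1 jump_eq_zero))

lemma strictMono_cdf [ν.IsOpenPosMeasure] : StrictMono (cdf ν) := by
  intro x y hxy
  have increment_pos : 0 < ENNReal.ofReal (cdf ν y - cdf ν x) := by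
    rw [← StieltjesFunction.measure_Ioc, measure_cdf]
    exact (isOpen_Ioo.measure_pos ν (nonempty_Ioo.2 hxy)).trans_le
      (measure_mono Ioo_subset_Ioc_self)
  exact sub_pos.1 (ENNReal.ofReal_pos.1 increment_pos)

instance : IsProbabilityMeasure unif01 := ⟨by simp [unif01]⟩

lemma ae_unif01_mem_Ioo : ∀ᵐ u ∂unif01, u ∈ Ioo (0 : ℝ) 1 :=
  ae_restrict_mem measurableSet_Ioo

lemma unif01_Iic {p : ℝ} (hp : p ≤ 1) : unif01 (Iic p) = ENNReal.ofReal p := by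
  rw [unif01, restrict_Ioo_eq_restrict_Ioc, Measure.restrict_apply measurableSet_Iic, inter_comm,
    Ioc_inter_Iic, min_eq_right hp, Real.volume_Ioc, sub_zero]

lemma hasLaw_quantileFn_cdf : HasLaw (quantileFn (cdf ν)) ν unif01 := by
  have hq : AEMeasurable (quantileFn (cdf ν)) unif01 :=
    aemeasurable_restrict_of_monotoneOn measurableSet_Ioo (monotoneOn_quantileFn_cdf ν)
  have := Measure.isProbabilityMeasure_map hq
  refine ⟨hq, Measure.ext_of_Iic _ _ fun x => ?_⟩
  calc unif01.map (quantileFn (cdf ν)) (Iic x)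
      = unif01 (quantileFn (cdf ν) ⁻¹' Iic x) :=
        Measure.map_apply_of_aemeasurable hq measurableSet_Iic
    _ = unif01 (Iic (cdf ν x)) := measure_congr <| by
        filter_upwards [ae_unif01_mem_Ioo] with u hu
        exact propext (quantileFn_cdf_le_iff ν hu x)
    _ = ν (Iic x) := by rw [unif01_Iic (cdf_le_one ν x), ofReal_cdf]

lemma hasLaw_cdf (hν : Continuous (cdf ν)) : HasLaw (cdf ν) unif01 ν where
  aemeasurable := hν.aemeasurable
  map_eq := by
    have hq := hasLaw_quantileFn_cdf ν
    calc ν.map (cdf ν)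
        = (unif01.map (quantileFn (cdf ν))).map (cdf ν) := by rw [hq.map_eq]
      _ = unif01.map (cdf ν ∘ quantileFn (cdf ν)) :=
          AEMeasurable.map_map_of_aemeasurable hν.aemeasurable hq.aemeasurable
      _ = unif01.map id := Measure.map_congr <| by
          filter_upwards [ae_unif01_mem_Ioo] with u hu using cdf_quantileFn ν hν hu
      _ = unif01 := Measure.map_id

lemma hasLaw_quantileFn_cdf_comp_cdf (hμ : Continuous (cdf μ)) :
    HasLaw (quantileFn (cdf ν) ∘ cdf μ) ν μ :=
  (hasLaw_quantileFn_cdf ν).comp (hasLaw_cdf μ hμ)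

end Quantile

section Pearson

variable {Ω ι : Type*} [MeasurableSpace Ω] {μ : Measure Ω} {X Y : Ω → ℝ}

lemma pearson_eq_covariance_div [IsProbabilityMeasure μ] (hX : MemLp X 2 μ) (hY : MemLp Y 2 μ) :
    pearson μ X Y = cov[X, Y; μ] / √(Var[X; μ] * Var[Y; μ]) := by
  rw [covariance_eq_sub hX hY]
  rfl

lemma pearson_self [IsProbabilityMeasure μ] (hX : MemLp X 2 μ) (hvar : Var[X; μ] ≠ 0) :
    pearson μ X X = 1 := by
  rw [pearson_eq_covariance_div hX hX, covariance_self hX.aemeasurable,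
    Real.sqrt_mul_self (variance_nonneg X μ), div_self hvar]

lemma posSemidef_covariance [IsFiniteMeasure μ] {Y : ι → Ω → ℝ} (hY : ∀ i, MemLp (Y i) 2 μ) :
    (Matrix.of fun i j => cov[Y i, Y j; μ]).PosSemidef := by
  refine ⟨Matrix.ext fun i j => covariance_comm _ _, fun x => ?_⟩
  have hterm : ∀ i ∈ x.support, MemLp (fun ω => x i * Y i ω) 2 μ :=
    fun i _ => (hY i).const_mul (x i)
  have hsum : MemLp (fun ω => ∑ i ∈ x.support, x i * Y i ω) 2 μ := memLp_finsetSum _ hterm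
  calc 0 ≤ Var[fun ω => ∑ i ∈ x.support, x i * Y i ω; μ] := variance_nonneg _ _
    _ = ∑ i ∈ x.support, ∑ j ∈ x.support,
          cov[fun ω => x i * Y i ω, fun ω => x j * Y j ω; μ] := by
        rw [← covariance_self hsum.aemeasurable, covariance_fun_sum_fun_sum' hterm hterm]
    _ = ∑ i ∈ x.support, ∑ j ∈ x.support, star (x i) * cov[Y i, Y j; μ] * x j := by
        refine Finset.sum_congr rfl fun i _ => Finset.sum_congr rfl fun j _ => ?_
        rw [covariance_const_mul_left, covariance_const_mul_right, star_trivial]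
        ring

lemma posSemidef_pearson [IsProbabilityMeasure μ] {Y : ι → Ω → ℝ} (hY : ∀ i, MemLp (Y i) 2 μ) :
    (Matrix.of fun i j => pearson μ (Y i) (Y j)).PosSemidef := by
  have pearson_eq_covariance_standardized (i j : ι) : pearson μ (Y i) (Y j) =
      cov[fun ω => Y i ω / √Var[Y i; μ], fun ω => Y j ω / √Var[Y j; μ]; μ] := by
    rw [covariance_fun_div_left, covariance_fun_div_right, div_div,
      pearson_eq_covariance_div (hY i) (hY j), Real.sqrt_mul (variance_nonneg _ _), mul_comm √_]
  simp only [pearson_eq_covariance_standardized]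
  exact posSemidef_covariance fun i => by
    simpa only [div_eq_mul_inv] using (hY i).mul_const _

lemma mem_Icc_of_posSemidef_of_diag_eq_one {P : Matrix ι ι ℝ} (hP : P.PosSemidef)
    (hdiag : ∀ i, P i i = 1) (i j : ι) : P i j ∈ Icc (-1) 1 := by
  have hminor : 0 ≤ (P.submatrix ![i, j] ![i, j]).det := (hP.submatrix ![i, j]).det_nonneg
  have hsymm : P j i = P i j := hP.1.apply i j
  have hsq : P i j * P i j ≤ 1 := by
    rw [det_fin_two] at hminor
    simpa [hdiag, hsymm] using hminor
  exact abs_le.1 (abs_le_one_iff_mul_self_le_one.2 hsq)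

lemma pearson_mem_Pd [IsProbabilityMeasure μ] {d : ℕ} {Y : Fin d → Ω → ℝ}
    (hY : ∀ i, MemLp (Y i) 2 μ) (hvar : ∀ i, Var[Y i; μ] ≠ 0) :
    Matrix.of (fun i j => pearson μ (Y i) (Y j)) ∈ Pd d :=
  have hpsd := posSemidef_pearson hY
  have hdiag := fun i => pearson_self (hY i) (hvar i)
  ⟨hpsd.1, mem_Icc_of_posSemidef_of_diag_eq_one hpsd hdiag, hpsd, hdiag⟩

end Pearson

section StandardNormal

lemma isOpenPosMeasure_gaussianReal {m : ℝ} {v : NNReal} (hv : v ≠ 0) :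
    (gaussianReal m v).IsOpenPosMeasure :=
  (gaussianReal_absolutelyContinuous' m hv).isOpenPosMeasure

lemma stdNormalCDF_eq_cdf : stdNormalCDF = cdf (gaussianReal 0 1) :=
  cdfOf_eq_cdf _

lemma continuous_stdNormalCDF : Continuous stdNormalCDF := by
  have := nullSingletonClass_gaussianReal (μ := 0) one_ne_zero
  exact stdNormalCDF_eq_cdf ▸ continuous_cdf _

lemma strictMono_stdNormalCDF : StrictMono stdNormalCDF := by
  have := isOpenPosMeasure_gaussianReal (m := 0) one_ne_zero
  exact stdNormalCDF_eq_cdf ▸ strictMono_cdf _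

variable {d : ℕ} {μ : Measure (Fin d → ℝ)} {i : Fin d}

lemma hasLaw_vdWScore [IsProbabilityMeasure μ] (hμ : Continuous (cdfOf (μ.map fun x => x i))) :
    HasLaw (vdWScore d μ i) (gaussianReal 0 1) μ := by
  have hmargin : HasLaw (fun x : Fin d → ℝ => x i) (μ.map fun x => x i) μ :=
    ⟨(measurable_pi_apply i).aemeasurable, rfl⟩
  have := Measure.isProbabilityMeasure_map hmargin.aemeasurable
  unfold vdWScore
  rw [cdfOf_eq_cdf] at hμ ⊢
  rw [stdNormalCDF_eq_cdf]
  exact (hasLaw_quantileFn_cdf_comp_cdf _ _ hμ).comp hmargin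

lemma vdWScore_of_hasLaw_gaussianReal (hμ : HasLaw (fun x => x i) (gaussianReal 0 1) μ) :
    vdWScore d μ i = fun x => x i := by
  funext x
  rw [vdWScore, hμ.map_eq]
  exact quantileFn_apply_of_strictMono strictMono_stdNormalCDF (x i)

lemma Wd_subset_Pd (d : ℕ) : Wd d ⊆ Pd d := by
  rintro P ⟨μ, _, hcont, hP⟩
  obtain rfl : P = Matrix.of fun i j => pearson μ (vdWScore d μ i) (vdWScore d μ j) :=
    Matrix.ext hP
  have hscore := fun i => hasLaw_vdWScore (hcont i)
  exact pearson_mem_Pd (fun i => (hscore i).hasGaussianLaw.memLp_two)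
    fun i => by simp [(hscore i).variance_eq]

end StandardNormal

section NormalLaw

variable {ι κ : Type*} [Fintype κ]

lemma measurable_mulVec (A : Matrix ι κ ℝ) : Measurable A.mulVec :=
  measurable_pi_iff.2 fun i => by simp only [mulVec, dotProduct]; fun_prop

/-- The centred multivariate normal distribution with covariance matrix `A * Aᵀ`, realized as the
law of `A Z` for a vector `Z` of independent standard normal variables. -/
def normalLaw (A : Matrix ι κ ℝ) : Measure (ι → ℝ) :=
  (Measure.pi fun _ : κ => gaussianReal 0 1).map A.mulVec

instance (A : Matrix ι κ ℝ) : IsProbabilityMeasure (normalLaw A) :=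
  Measure.isProbabilityMeasure_map (measurable_mulVec A).aemeasurable

lemma hasLaw_eval_pi_gaussianReal (k : κ) : HasLaw (fun z : κ → ℝ => z k) (gaussianReal 0 1)
    (Measure.pi fun _ => gaussianReal 0 1) :=
  (measurePreserving_eval (fun _ : κ => gaussianReal 0 1) k).hasLaw

lemma iIndepFun_eval_pi_gaussianReal : iIndepFun (fun k (z : κ → ℝ) => z k)
    (Measure.pi fun _ => gaussianReal 0 1) :=
  iIndepFun_pi (X := fun _ => id) fun _ => aemeasurable_id

lemma covariance_eval_pi_gaussianReal [DecidableEq κ] (k l : κ) :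
    cov[fun z => z k, fun z => z l; Measure.pi fun _ : κ => gaussianReal 0 1] =
      (1 : Matrix κ κ ℝ) k l := by
  have hlaw := hasLaw_eval_pi_gaussianReal (κ := κ)
  obtain rfl | hkl := eq_or_ne k l
  · rw [covariance_self (hlaw k).aemeasurable, (hlaw k).variance_eq, variance_id_gaussianReal,
      one_apply_eq, NNReal.coe_one]
  · rw [one_apply_ne hkl]
    exact (iIndepFun_eval_pi_gaussianReal.indepFun hkl).covariance_eq_zero
      (hlaw k).hasGaussianLaw.memLp_two (hlaw l).hasGaussianLaw.memLp_two

lemma hasLaw_mulVec_normalLaw (A : Matrix ι κ ℝ) :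
    HasLaw A.mulVec (normalLaw A) (Measure.pi fun _ => gaussianReal 0 1) :=
  ⟨(measurable_mulVec A).aemeasurable, rfl⟩

lemma covariance_eval_normalLaw (A : Matrix ι κ ℝ) (i j : ι) :
    cov[fun x => x i, fun x => x j; normalLaw A] = (A * Aᵀ) i j := by
  classical
  have hterm (i : ι) (k : κ) :
      MemLp (fun z : κ → ℝ => A i k * z k) 2 (Measure.pi fun _ => gaussianReal 0 1) :=
    (hasLaw_eval_pi_gaussianReal k).hasGaussianLaw.memLp_two.const_mul (A i k)
  rw [← (hasLaw_mulVec_normalLaw A).covariance_comp (measurable_pi_apply i).aemeasurable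
    (measurable_pi_apply j).aemeasurable]
  calc cov[fun z => ∑ k, A i k * z k, fun z => ∑ k, A j k * z k;
        Measure.pi fun _ => gaussianReal 0 1]
      = ∑ k, ∑ l, A j l * (A i k * (1 : Matrix κ κ ℝ) k l) := by
        simp only [covariance_fun_sum_fun_sum (hterm i) (hterm j), covariance_const_mul_left,
          covariance_const_mul_right, covariance_eval_pi_gaussianReal]
    _ = (A * Aᵀ) i j := by simp [mul_apply, one_apply, mul_comm]

lemma integral_eval_normalLaw (A : Matrix ι κ ℝ) (i : ι) : ∫ x, x i ∂normalLaw A = 0 := by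
  have hlaw := hasLaw_eval_pi_gaussianReal (κ := κ)
  rw [← (hasLaw_mulVec_normalLaw A).integral_comp (measurable_pi_apply i).aestronglyMeasurable]
  calc ∫ z, ∑ k, A i k * z k ∂Measure.pi (fun _ => gaussianReal 0 1)
      = ∑ k, A i k * ∫ z, z k ∂Measure.pi (fun _ => gaussianReal 0 1) := by
        rw [integral_finsetSum _ fun k _ => (hlaw k).hasGaussianLaw.integrable.const_mul (A i k)]
        simp only [integral_const_mul]
    _ = 0 := by simp [(hlaw _).integral_eq]

lemma hasGaussianLaw_eval_normalLaw (A : Matrix ι κ ℝ) (i : ι) :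
    HasGaussianLaw (fun x => x i) (normalLaw A) := by
  have hZ : HasGaussianLaw (fun z : κ → ℝ => z) (Measure.pi fun _ => gaussianReal 0 1) :=
    iIndepFun_eval_pi_gaussianReal.hasGaussianLaw
      fun k => (hasLaw_eval_pi_gaussianReal k).hasGaussianLaw
  have hAZ : HasGaussianLaw ((fun x => x i) ∘ A.mulVec) (Measure.pi fun _ => gaussianReal 0 1) :=
    hZ.map (LinearMap.proj i ∘ₗ A.mulVecLin).toContinuousLinearMap
  constructor
  rw [normalLaw, Measure.map_map (measurable_pi_apply i) (measurable_mulVec A)]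
  exact hAZ.isGaussian_map

lemma hasLaw_eval_normalLaw (A : Matrix ι κ ℝ) (i : ι) :
    HasLaw (fun x => x i) (gaussianReal 0 ((A * Aᵀ) i i).toNNReal) (normalLaw A) where
  aemeasurable := (measurable_pi_apply i).aemeasurable
  map_eq := by
    rw [(hasGaussianLaw_eval_normalLaw A i).map_eq_gaussianReal, integral_eval_normalLaw,
      ← covariance_self (measurable_pi_apply i).aemeasurable, covariance_eval_normalLaw]

end NormalLaw

section Realization

variable {d : ℕ} {κ : Type*} [Fintype κ] {A : Matrix (Fin d) κ ℝ}

lemma hasLaw_eval_normalLaw_of_diag_eq_one {i : Fin d} (hi : (A * Aᵀ) i i = 1) :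
    HasLaw (fun x => x i) (gaussianReal 0 1) (normalLaw A) := by
  simpa [hi] using hasLaw_eval_normalLaw A i

lemma pearson_vdWScore_normalLaw {i j : Fin d} (hi : (A * Aᵀ) i i = 1) (hj : (A * Aᵀ) j j = 1) :
    pearson (normalLaw A) (vdWScore d (normalLaw A) i) (vdWScore d (normalLaw A) j) =
      (A * Aᵀ) i j := by
  have hlawi := hasLaw_eval_normalLaw_of_diag_eq_one hi
  have hlawj := hasLaw_eval_normalLaw_of_diag_eq_one hj
  rw [vdWScore_of_hasLaw_gaussianReal hlawi, vdWScore_of_hasLaw_gaussianReal hlawj,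
    pearson_eq_covariance_div hlawi.hasGaussianLaw.memLp_two hlawj.hasGaussianLaw.memLp_two,
    covariance_eval_normalLaw, hlawi.variance_eq, hlawj.variance_eq]
  simp

lemma mul_transpose_mem_Wd (hA : ∀ i, (A * Aᵀ) i i = 1) : A * Aᵀ ∈ Wd d := by
  refine ⟨normalLaw A, inferInstance, fun i => ?_, fun i j =>
    (pearson_vdWScore_normalLaw (hA i) (hA j)).symm⟩
  rw [(hasLaw_eval_normalLaw_of_diag_eq_one (hA i)).map_eq]
  exact continuous_stdNormalCDF

open scoped MatrixOrder Matrix.Norms.L2Operator in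
lemma exists_eq_mul_transpose_of_posSemidef {ι : Type*} [Fintype ι] {P : Matrix ι ι ℝ}
    (hP : P.PosSemidef) : ∃ A : Matrix ι ι ℝ, P = A * Aᵀ := by
  classical exact CStarAlgebra.nonneg_iff_eq_mul_star_self.1 hP.nonneg

lemma Pd_subset_Wd (d : ℕ) : Pd d ⊆ Wd d := by
  rintro P ⟨-, -, hpsd, hdiag⟩
  obtain ⟨A, rfl⟩ := exists_eq_mul_transpose_of_posSemidef hpsd
  exact mul_transpose_mem_Wd hdiag

end Realization

theorem vdW_matrices_eq_correlation_matrices_general (d : ℕ) :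
    Wd d = Pd d ∧
    ∀ P ∈ Pd d, ∀ (κ : Type*) [Fintype κ] (A : Matrix (Fin d) κ ℝ), A * A.transpose = P →
      ∀ i j : Fin d, P i j =
        pearson ((Measure.pi fun _ : κ => gaussianReal 0 1).map A.mulVec)
          (vdWScore d ((Measure.pi fun _ : κ => gaussianReal 0 1).map A.mulVec) i)
          (vdWScore d ((Measure.pi fun _ : κ => gaussianReal 0 1).map A.mulVec) j) := by
  refine ⟨(Wd_subset_Pd d).antisymm (Pd_subset_Wd d), ?_⟩
  rintro _ ⟨-, -, -, hdiag⟩ κ _ A rfl i j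
  exact (pearson_vdWScore_normalLaw (hdiag i) (hdiag j)).symm

/-- the set of van der Waerden's matrices coincides with the set of all
correlation matrices; in particular, any `P ∈ P_d` is attained as the van der Waerden
matrix of the multivariate normal distribution with covariance matrix `P` (realized as
the image of a standard Gaussian vector under any `A` with `A Aᵀ = P`). -/
theorem vdW_matrices_eq_correlation_matrices (d : ℕ) :
    Wd d = Pd d ∧
    ∀ P ∈ Pd d, ∀ A : Matrix (Fin d) (Fin d) ℝ, A * A.transpose = P →
      ∀ i j : Fin d, P i j =
        pearson ((Measure.pi fun _ : Fin d => gaussianReal 0 1).map A.mulVec)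
          (vdWScore d ((Measure.pi fun _ : Fin d => gaussianReal 0 1).map A.mulVec) i)
          (vdWScore d ((Measure.pi fun _ : Fin d => gaussianReal 0 1).map A.mulVec) j) := by
  exact (vdW_matrices_eq_correlation_matrices_general d).imp_right fun h P hP => h P hP (Fin d)
end
end

section
/- For l = 1,…,2^{d−1}, let b(l) = (b1,…,bd) ∈ {0,1}^d be the binary expansion defined by l = 1 + Σ_{j=1}^d bj·2^{d−j} (so b1 = 0), and let π_l be the distribution on {0,1}^d putting mass 1/2 on each of b(l) and 1 − b(l); its correlation matrix is ρ(π_l) with (i,j)-entry 2·1{b_i(l) = b_j(l)} − 1. Then the set P^B_d(1/2) of correlation matrices of random vectors with Bern(1/2) margins equals the convex hull of {ρ(π_l) : l = 1,…,2^{d−1}}, i.e., P^B_d(1/2) = {Σ_{l=1}^{2^{d−1}} α_l ρ(π_l) : α_l ≥ 0, Σ_l α_l = 1}. -/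
open MeasureTheory ProbabilityTheory Set

noncomputable section

/-- The `j`-th digit (`j : Fin d`, 1-indexed position `j+1`) of the binary expansion
`b(l)` determined by `l = 1 + Σ_{j=1}^d b_j 2^{d−j}`; here the argument is `l − 1`,
ranging over `{0, …, 2^{d−1} − 1}`. -/
def bbit (d : ℕ) (l : ℕ) (j : Fin d) : Bool := l.testBit (d - 1 - (j : ℕ))

/-- The correlation matrix `ρ(π_l)` of the two-point distribution `π_l`:
its `(i,j)` entry is `2·1{b_i(l) = b_j(l)} − 1`. -/
def cutMatrix (d : ℕ) (l : ℕ) : Matrix (Fin d) (Fin d) ℝ :=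
  Matrix.of fun i j => if bbit d l i = bbit d l j then (1:ℝ) else -1

/-- The two-point distribution `π_l` putting mass 1/2 on each of `b(l)` and `1 − b(l)`. -/
def piL (d : ℕ) (l : ℕ) : Measure (Fin d → ℝ) :=
  (1/2 : ENNReal) • Measure.dirac (fun j => if bbit d l j then (1:ℝ) else 0) +
    (1/2 : ENNReal) • Measure.dirac (fun j => if bbit d l j then (0:ℝ) else 1)

/-!
Two `Bern(1/2)` variables have correlation `E[s(X, Y)]`, where `s` is `1` if `X = Y` and `-1`
otherwise. The correlation matrix of a random vector with `Bern(1/2)` margins is therefore the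
average, over its values `x ∈ {0,1}^d`, of the matrices `s(x i, x j)`. Such a matrix is unchanged
when `x` is complemented, so one may take `x 0 = 0`, and it is then one of the `ρ(π_l)`.
Conversely, mixing laws with the same square-integrable margins keeps means and variances fixed, so
correlation matrices with given margins form a convex set, and this set contains each `ρ(π_l)`.
-/

open unitInterval

section Mixture

variable {Ω : Type*} [MeasurableSpace Ω] {μ κ : Measure Ω}

/-- The mixture of `μ` and `κ` with weights `p` and `1 - p`. Taking `p` in the unit interval makes a
mixture of probability measures a probability measure by instance inference. -/
abbrev mixture (p : I) (μ κ : Measure Ω) : Measure Ω := toNNReal p • μ + toNNReal (σ p) • κ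

lemma hasLaw_mixture {𝓧 : Type*} [MeasurableSpace 𝓧] {X : Ω → 𝓧} {ν ν' : Measure 𝓧}
    (hμ : HasLaw X ν μ) (hκ : HasLaw X ν' κ) (p : I) :
    HasLaw X (mixture p ν ν') (mixture p μ κ) where
  aemeasurable := (hμ.aemeasurable.smul_measure _).add_measure (hκ.aemeasurable.smul_measure _)
  map_eq := by
    rw [mixture, AEMeasurable.map_add₀ (hμ.aemeasurable.smul_measure _)
      (hκ.aemeasurable.smul_measure _), Measure.map_smul, Measure.map_smul, hμ.map_eq, hκ.map_eq]

lemma mixture_self (μ : Measure Ω) (p : I) : mixture p μ μ = μ := by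
  simp [mixture, ← add_smul]

lemma integral_mixture {E : Type*} [NormedAddCommGroup E] [NormedSpace ℝ E] {f : Ω → E}
    (hμ : Integrable f μ) (hκ : Integrable f κ) (p : I) :
    ∫ ω, f ω ∂mixture p μ κ = (p : ℝ) • (∫ ω, f ω ∂μ) + (1 - p : ℝ) • ∫ ω, f ω ∂κ := by
  rw [integral_add_measure hμ.smul_measure_nnreal hκ.smul_measure_nnreal]
  simp [NNReal.smul_def]

end Mixture

lemma memLp_of_hasLaw {Ω E : Type*} [MeasurableSpace Ω] [NormedAddCommGroup E]
    [MeasurableSpace E] {μ : Measure Ω} {ν : Measure E} {X : Ω → E} {q : ENNReal}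
    (hX : HasLaw X ν μ) (hν : MemLp id q ν) : MemLp X q μ := by
  rw [← hX.map_eq] at hν
  exact hν.comp_of_map hX.aemeasurable

section Pearson

variable {Ω : Type*} [MeasurableSpace Ω] {μ κ : Measure Ω} [IsProbabilityMeasure μ]
  [IsProbabilityMeasure κ] {ν : Measure ℝ} {X Y : Ω → ℝ}

lemma pearson_eq_covariance_div_variance (hX : HasLaw X ν μ) (hY : HasLaw Y ν μ)
    (hν : MemLp id 2 ν) : pearson μ X Y = cov[X, Y; μ] / Var[id; ν] := by
  rw [pearson, covariance_eq_sub (memLp_of_hasLaw hX hν) (memLp_of_hasLaw hY hν),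
    hX.variance_eq, hY.variance_eq, Real.sqrt_mul_self (variance_nonneg _ _)]
  rfl

lemma covariance_mixture (hXμ : MemLp X 2 μ) (hYμ : MemLp Y 2 μ) (hXκ : MemLp X 2 κ)
    (hYκ : MemLp Y 2 κ) (hX : μ[X] = κ[X]) (hY : μ[Y] = κ[Y]) (p : I) :
    cov[X, Y; mixture p μ κ] = p * cov[X, Y; μ] + (1 - p) * cov[X, Y; κ] := by
  have mean_mixture {Z : Ω → ℝ} (hZμ : MemLp Z 2 μ) (hZκ : MemLp Z 2 κ) (hZ : μ[Z] = κ[Z]) :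
      ∫ ω, Z ω ∂mixture p μ κ = κ[Z] := by
    rw [integral_mixture (hZμ.integrable one_le_two) (hZκ.integrable one_le_two), hZ,
      smul_eq_mul, smul_eq_mul]
    ring
  simp only [covariance, mean_mixture hXμ hXκ hX, mean_mixture hYμ hYκ hY, hX, hY]
  exact integral_mixture
    ((hXμ.sub (memLp_const κ[X])).integrable_mul (hYμ.sub (memLp_const κ[Y])))
    ((hXκ.sub (memLp_const κ[X])).integrable_mul (hYκ.sub (memLp_const κ[Y]))) p

lemma pearson_mixture (hXμ : HasLaw X ν μ) (hYμ : HasLaw Y ν μ) (hXκ : HasLaw X ν κ)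
    (hYκ : HasLaw Y ν κ) (hν : MemLp id 2 ν) (p : I) :
    pearson (mixture p μ κ) X Y = p * pearson μ X Y + (1 - p) * pearson κ X Y := by
  have hX := mixture_self ν p ▸ hasLaw_mixture hXμ hXκ p
  have hY := mixture_self ν p ▸ hasLaw_mixture hYμ hYκ p
  rw [pearson_eq_covariance_div_variance hX hY hν, pearson_eq_covariance_div_variance hXμ hYμ hν,
    pearson_eq_covariance_div_variance hXκ hYκ hν,
    covariance_mixture (memLp_of_hasLaw hXμ hν) (memLp_of_hasLaw hYμ hν) (memLp_of_hasLaw hXκ hν)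
      (memLp_of_hasLaw hYκ hν) (hXμ.integral_eq.trans hXκ.integral_eq.symm)
      (hYμ.integral_eq.trans hYκ.integral_eq.symm)]
  ring

end Pearson

lemma hasLaw_eval_of_map_eq {ι 𝓧 : Type*} [MeasurableSpace 𝓧] {ν : Measure 𝓧}
    {μ : Measure (ι → 𝓧)} {j : ι} (h : μ.map (fun x => x j) = ν) :
    HasLaw (fun x => x j) ν μ :=
  ⟨(measurable_pi_apply j).aemeasurable, h⟩

theorem convex_corrSet {ν : Measure ℝ} (hν : MemLp id 2 ν) (d : ℕ) : Convex ℝ (corrSet ν d) := by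
  rintro P ⟨μ, hμ, hμν, hP⟩ Q ⟨κ, hκ, hκν, hQ⟩ a b ha hb hab
  obtain rfl : b = 1 - a := by linarith
  let p : I := ⟨a, ha, by linarith⟩
  have hXμ j := hasLaw_eval_of_map_eq (hμν j)
  have hXκ j := hasLaw_eval_of_map_eq (hκν j)
  refine ⟨mixture p μ κ, inferInstance, fun j => ?_, fun i j => ?_⟩
  · rw [(hasLaw_mixture (hXμ j) (hXκ j) p).map_eq, mixture_self]
  · rw [pearson_mixture (hXμ i) (hXμ j) (hXκ i) (hXκ j) hν, ← hP, ← hQ]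
    rfl

section Bernoulli

lemma ae_bernoulliMeasure {𝓧 : Type*} [MeasurableSpace 𝓧] [MeasurableSingletonClass 𝓧] (x y : 𝓧)
    (p : I) : ∀ᵐ z ∂bernoulliMeasure x y p, z = x ∨ z = y := by
  have hxy : MeasurableSet {z | ¬(z = x ∨ z = y)} := (Set.toFinite {x, y}).measurableSet.compl
  rw [ae_iff]
  exact bernoulliMeasure_apply_of_notMem_of_notMem p hxy (by simp) (by simp)

lemma memLp_bernoulliMeasure {𝓧 E : Type*} [MeasurableSpace 𝓧] [MeasurableSingletonClass 𝓧]
    [NormedAddCommGroup E] (x y : 𝓧) (p : I) (f : 𝓧 → E) (q : ENNReal) :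
    MemLp f q (bernoulliMeasure x y p) := by
  refine .of_bound (integrable_bernoulliMeasure x y p f).1 (max ‖f x‖ ‖f y‖) ?_
  filter_upwards [ae_bernoulliMeasure x y p] with z hz
  rcases hz with rfl | rfl <;> simp

lemma variance_id_bernoulliMeasure_one_zero (p : I) :
    Var[id; bernoulliMeasure (1 : ℝ) 0 p] = p * (1 - p) := by
  rw [variance_eq_integral aemeasurable_id, integral_bernoulliMeasure, integral_bernoulliMeasure]
  simp only [id_eq, smul_eq_mul]
  ring

lemma bern_eq_bernoulliMeasure (p : I) : bern p = bernoulliMeasure 1 0 p := by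
  have hp : ENNReal.ofReal p = toNNReal p := ENNReal.ofReal_eq_coe_nnreal p.2.1
  have hσp : ENNReal.ofReal (1 - p) = toNNReal (σ p) := ENNReal.ofReal_eq_coe_nnreal (σ p).2.1
  rw [bern, hp, hσp]
  rfl

/-- The probability `1/2` as a point of the unit interval. -/
def fairProb : I := ⟨1 / 2, by norm_num, by norm_num⟩

lemma symm_fairProb : σ fairProb = fairProb := Subtype.ext (by norm_num [fairProb])

lemma bernoulliMeasure_fairProb_comm {𝓧 : Type*} [MeasurableSpace 𝓧] (x y : 𝓧) :
    bernoulliMeasure x y fairProb = bernoulliMeasure y x fairProb := by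
  rw [bernoulliMeasure_def, bernoulliMeasure_def, symm_fairProb, add_comm]

lemma bern_half : bern (1 / 2) = bernoulliMeasure 1 0 fairProb :=
  bern_eq_bernoulliMeasure fairProb

variable {Ω : Type*} [MeasurableSpace Ω] {μ : Measure Ω} {X Y : Ω → ℝ}

lemma ae_eq_zero_or_one_of_hasLaw_bern {p : I} (hX : HasLaw X (bern p) μ) :
    ∀ᵐ ω ∂μ, X ω = 0 ∨ X ω = 1 := by
  rw [bern_eq_bernoulliMeasure] at hX
  refine (hX.ae_iff (p := fun x => x = 0 ∨ x = 1) (by fun_prop)).2 ?_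
  filter_upwards [ae_bernoulliMeasure 1 0 p] with x hx using hx.symm

lemma pearson_eq_integral_ite_eq (hX : HasLaw X (bern (1 / 2)) μ)
    (hY : HasLaw Y (bern (1 / 2)) μ) :
    pearson μ X Y = ∫ ω, (if X ω = Y ω then 1 else -1) ∂μ := by
  have hX01 := ae_eq_zero_or_one_of_hasLaw_bern (p := fairProb) hX
  have hY01 := ae_eq_zero_or_one_of_hasLaw_bern (p := fairProb) hY
  rw [bern_half] at hX hY
  have := hX.isProbabilityMeasure
  have mean_eq_half : ∫ x, x ∂bernoulliMeasure (1 : ℝ) 0 fairProb = 1 / 2 := by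
    simp [integral_bernoulliMeasure, fairProb]
  rw [pearson_eq_covariance_div_variance hX hY (memLp_bernoulliMeasure _ _ _ _ _),
    variance_id_bernoulliMeasure_one_zero, covariance, hX.integral_eq, hY.integral_eq, mean_eq_half,
    ← integral_div]
  refine integral_congr_ae ?_
  filter_upwards [hX01, hY01] with ω hXω hYω
  rcases hXω with hXω | hXω <;> rcases hYω with hYω | hYω <;> norm_num [hXω, hYω, fairProb]

end Bernoulli

section TwoPoint

variable (d l : ℕ)

lemma piL_eq_bernoulliMeasure :
    piL d l = bernoulliMeasure (fun j => if bbit d l j then (1 : ℝ) else 0)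
      (fun j => if bbit d l j then (0 : ℝ) else 1) fairProb := by
  have half_eq : (1 / 2 : ENNReal) = toNNReal fairProb :=
    (by simp : (1 / 2 : ENNReal) = ENNReal.ofReal (1 / 2)).trans
      (ENNReal.ofReal_eq_coe_nnreal fairProb.2.1)
  rw [bernoulliMeasure_def, symm_fairProb, piL, half_eq]
  rfl

lemma hasLaw_eval_piL (j : Fin d) : HasLaw (fun x => x j) (bern (1 / 2)) (piL d l) := by
  refine hasLaw_eval_of_map_eq ?_
  rw [piL_eq_bernoulliMeasure, map_bernoulliMeasure, bern_half]
  cases hj : bbit d l j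
  · simpa [hj] using bernoulliMeasure_fairProb_comm (0 : ℝ) 1
  · simp [hj]

lemma pearson_piL (i j : Fin d) :
    pearson (piL d l) (fun x => x i) (fun x => x j) = cutMatrix d l i j := by
  rw [pearson_eq_integral_ite_eq (hasLaw_eval_piL d l i) (hasLaw_eval_piL d l j),
    piL_eq_bernoulliMeasure, integral_bernoulliMeasure, cutMatrix]
  cases hi : bbit d l i <;> cases hj : bbit d l j <;> norm_num [hi, hj, fairProb]

lemma cutMatrix_mem_PBd : cutMatrix d l ∈ PBd d :=
  ⟨piL d l, piL_eq_bernoulliMeasure d l ▸ inferInstance, fun j => (hasLaw_eval_piL d l j).map_eq,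
    fun i j => (pearson_piL d l i j).symm⟩

end TwoPoint

section Digits

lemma bbit_ofBits {d : ℕ} (b : Fin d → Bool) : bbit d (Nat.ofBits (b ∘ Fin.rev)) = b := by
  ext j
  have digit_eq : d - 1 - (j : ℕ) = j.rev := by rw [Fin.val_rev]; omega
  rw [bbit, digit_eq, Nat.testBit_ofBits_lt _ _ j.rev.isLt, Fin.eta, Function.comp_apply,
    Fin.rev_rev]

lemma exists_bbit_eq {n : ℕ} {b : Fin (n + 1) → Bool} (hb : b 0 = false) :
    ∃ l : Fin (2 ^ n), bbit (n + 1) l = b := by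
  refine ⟨⟨Nat.ofBits (b ∘ Fin.rev), Nat.lt_pow_two_of_testBit _ fun k hk => ?_⟩, bbit_ofBits b⟩
  obtain rfl | hk := hk.eq_or_lt
  · simpa [bbit, hb] using congrFun (bbit_ofBits b) 0
  · exact Nat.testBit_ofBits_ge _ _ hk

-- Complementing `b` when `b 0 = true` does not change which coordinates agree.
lemma exists_bbit_eq_bbit_iff {d : ℕ} (b : Fin d → Bool) :
    ∃ l : Fin (2 ^ (d - 1)), ∀ i j, bbit d l i = bbit d l j ↔ b i = b j := by
  cases d with
  | zero => exact ⟨0, fun i => i.elim0⟩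
  | succ n =>
    obtain ⟨l, hl⟩ := exists_bbit_eq (b := fun j => b j ^^ b 0) (Bool.xor_self _)
    exact ⟨l, fun i j => by simp [hl]⟩

lemma exists_measurable_cutMatrix_eq_ite (d : ℕ) :
    ∃ L : (Fin d → ℝ) → Fin (2 ^ (d - 1)), Measurable L ∧
      ∀ x, (∀ j, x j = 0 ∨ x j = 1) →
        ∀ i j, cutMatrix d (L x) i j = if x i = x j then 1 else -1 := by
  choose index hindex using exists_bbit_eq_bbit_iff (d := d)
  let digits (x : Fin d → ℝ) (j : Fin d) : Bool := decide (x j = 1)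
  have measurable_digits : Measurable digits := by
    refine measurable_pi_lambda _ fun j => measurable_to_bool ?_
    have preimage_eq : (fun x => digits x j) ⁻¹' {true} = (fun x => x j) ⁻¹' {1} := by
      ext x; simp [digits]
    exact preimage_eq ▸ measurable_pi_apply j (measurableSet_singleton 1)
  refine ⟨index ∘ digits, Measurable.of_discrete.comp measurable_digits, fun x hx i j => ?_⟩
  have digits_eq_iff : digits x i = digits x j ↔ x i = x j := by
    rcases hx i with hi | hi <;> rcases hx j with hj | hj <;> simp [digits, hi, hj]
  simp only [cutMatrix, Matrix.of_apply, Function.comp_apply, hindex, digits_eq_iff]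

end Digits

lemma convex_PBd (d : ℕ) : Convex ℝ (PBd d) := by
  rw [PBd, bern_half]
  exact convex_corrSet (memLp_bernoulliMeasure _ _ _ _ _) d

lemma exists_weights_integral_comp_eq_sum {Ω ι : Type*} [MeasurableSpace Ω] [Fintype ι]
    [MeasurableSpace ι] [DiscreteMeasurableSpace ι] (μ : Measure Ω) [IsProbabilityMeasure μ]
    {L : Ω → ι} (hL : Measurable L) :
    ∃ α : ι → ℝ, (∀ l, 0 ≤ α l) ∧ ∑ l, α l = 1 ∧
      ∀ f : ι → ℝ, ∫ ω, f (L ω) ∂μ = ∑ l, α l * f l := by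
  have : IsProbabilityMeasure (μ.map L) := Measure.isProbabilityMeasure_map hL.aemeasurable
  refine ⟨fun l => (μ.map L).real {l}, fun l => measureReal_nonneg, by simp, fun f => ?_⟩
  rw [← integral_map hL.aemeasurable (.of_discrete), integral_fintype .of_finite]
  simp only [smul_eq_mul]

lemma exists_weights_of_mem_PBd {d : ℕ} {P : Matrix (Fin d) (Fin d) ℝ} (hP : P ∈ PBd d) :
    ∃ α : Fin (2 ^ (d - 1)) → ℝ, (∀ l, 0 ≤ α l) ∧ ∑ l, α l = 1 ∧
      P = ∑ l, α l • cutMatrix d l := by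
  obtain ⟨μ, hμ, hmargin, hP⟩ := hP
  have hlaw j := hasLaw_eval_of_map_eq (hmargin j)
  have hx01 : ∀ᵐ x ∂μ, ∀ j, x j = 0 ∨ x j = 1 :=
    ae_all_iff.2 fun j => ae_eq_zero_or_one_of_hasLaw_bern (p := fairProb) (hlaw j)
  obtain ⟨L, hL, hcut⟩ := exists_measurable_cutMatrix_eq_ite d
  obtain ⟨α, hα0, hα1, hα⟩ := exists_weights_integral_comp_eq_sum μ hL
  refine ⟨α, hα0, hα1, Matrix.ext fun i j => ?_⟩
  calc P i j = ∫ x, (if x i = x j then 1 else -1) ∂μ := by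
        rw [hP, pearson_eq_integral_ite_eq (hlaw i) (hlaw j)]
    _ = ∫ x, cutMatrix d (L x) i j ∂μ :=
        integral_congr_ae (hx01.mono fun x hx => (hcut x hx i j).symm)
    _ = ∑ l, α l * cutMatrix d l i j := hα fun l => cutMatrix d l i j
    _ = (∑ l, α l • cutMatrix d l) i j := by simp [Matrix.sum_apply]

/-- the correlation matrix of `π_l` has entries `2·1{b_i(l)=b_j(l)} − 1`,
and `P^B_d(1/2)` is exactly the convex hull of the matrices `ρ(π_l)`,
`l = 1, …, 2^{d−1}`. -/
theorem bernoulli_corr_matrices_eq_convex_hull_of_cut_matrices (d : ℕ) :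
    (∀ l : Fin (2^(d-1)), ∀ i j : Fin d,
        pearson (piL d (l : ℕ)) (fun x => x i) (fun x => x j) = cutMatrix d (l : ℕ) i j) ∧
    PBd d = {P | ∃ α : Fin (2^(d-1)) → ℝ, (∀ l, 0 ≤ α l) ∧ (∑ l, α l = 1) ∧
        P = ∑ l, α l • cutMatrix d (l : ℕ)} := by
  refine ⟨fun l => pearson_piL d l, Set.ext fun P => ⟨exists_weights_of_mem_PBd, ?_⟩⟩
  rintro ⟨α, hα0, hα1, rfl⟩
  exact (convex_PBd d).sum_mem (fun l _ => hα0 l) hα1 fun l _ => cutMatrix_mem_PBd d l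
end
end

section
/- Let X = (X1,…,Xd) be a random vector with continuous margins F1,…,Fd, set Uj = Fj(Xj), let Ũ = (Ũ1,…,Ũd) be an independent copy of U = (U1,…,Ud), and define Bj = 1{Uj ≤ Ũj} for j = 1,…,d. Then each Bj ~ Bern(1/2), and the Pearson correlation ρ(Bi,Bj) equals Kendall's tau τ(Xi,Xj) = 4∫_{[0,1]^2} C_{ij} dC_{ij} − 1 for all i, j, where C_{ij} is the copula of (Xi,Xj). Consequently, every d×d matrix of pairwise Kendall's taus of a continuous random vector is a correlation matrix of a random vector with Bern(1/2) margins: T_d ⊆ P^B_d(1/2). -/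
open MeasureTheory ProbabilityTheory Set

noncomputable section

/-- The joint distribution function of a measure on ℝ². -/
def cdf2 (μ : Measure (ℝ × ℝ)) (u v : ℝ) : ℝ := (μ (Set.Iic u ×ˢ Set.Iic v)).toReal

/-- The `j`-th marginal distribution function of a random vector with law `μ`. -/
def marginCDF (d : ℕ) (μ : Measure (Fin d → ℝ)) (j : Fin d) : ℝ → ℝ :=
  cdfOf (μ.map fun x => x j)

/-- The copula of the pair `(X_i, X_j)` (for continuous margins): the law of
`(F_i(X_i), F_j(X_j))`. -/
def pairCopula (d : ℕ) (μ : Measure (Fin d → ℝ)) (i j : Fin d) : Measure (ℝ × ℝ) :=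
  μ.map (fun x => (marginCDF d μ i (x i), marginCDF d μ j (x j)))

/-- Kendall's tau of the pair `(X_i, X_j)`: `τ = 4 ∫ C_{ij} dC_{ij} − 1`. -/
def kendallTau (d : ℕ) (μ : Measure (Fin d → ℝ)) (i j : Fin d) : ℝ :=
  4 * (∫ p, cdf2 (pairCopula d μ i j) p.1 p.2 ∂(pairCopula d μ i j)) - 1

/-- The indicator `B_j = 1{U_j ≤ Ũ_j}` on the product space carrying `(X, X̃)`. -/
def kendallInd (d : ℕ) (μ : Measure (Fin d → ℝ)) (j : Fin d) :
    (Fin d → ℝ) × (Fin d → ℝ) → ℝ :=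
  fun ω => if marginCDF d μ j (ω.1 j) ≤ marginCDF d μ j (ω.2 j) then 1 else 0

/-!
Two independent copies `U`, `Ũ` of the same atomless variable satisfy `U ≤ Ũ` with probability
`1/2`, because the two orderings are exchangeable and ties are null. When `F` is continuous, `F(X)`
is atomless even where `F` is flat: a level set of `F` carries no mass. Hence each `B_j` is
`Bern(1/2)`, and since its variance is `1/4`, `ρ(B_i, B_j) = 4 P(B_i = B_j = 1) - 1`. Conditioning
on `Ũ`, the event `B_i = B_j = 1` has probability `C_{ij}(Ũ_i, Ũ_j)`, and so
`P(B_i = B_j = 1) = ∫ C_{ij} dC_{ij}`.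
-/

section DistributionFunction

variable (ν : Measure ℝ) [IsFiniteMeasure ν]

lemma monotone_cdfOf : Monotone (cdfOf ν) :=
  fun _ _ hab => measureReal_mono (Iic_subset_Iic.2 hab)

lemma measureReal_Ioc_eq_cdfOf_sub_cdfOf {a b : ℝ} (hab : a ≤ b) :
    ν.real (Ioc a b) = cdfOf ν b - cdfOf ν a := by
  rw [← Iic_sdiff_Iic, measureReal_sdiff (Iic_subset_Iic.2 hab) measurableSet_Iic]
  rfl

variable {ν}

lemma nullSingletonClass_of_continuous_cdfOf (hν : Continuous (cdfOf ν)) :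
    NullSingletonClass ν where
  measure_singleton a := by
    have increment_tendsto :
        Filter.Tendsto (fun b => cdfOf ν a - cdfOf ν b) (nhdsWithin a (Iio a)) (nhds 0) := by
      rw [← sub_self (cdfOf ν a)]
      exact (hν.continuousWithinAt (x := a)).const_sub (cdfOf ν a)
    have mass_le_increment : ∀ b ∈ Iio a, ν.real {a} ≤ cdfOf ν a - cdfOf ν b := fun b hb => by
      rw [← measureReal_Ioc_eq_cdfOf_sub_cdfOf ν (le_of_lt hb)]
      exact measureReal_mono (singleton_subset_iff.2 (right_mem_Ioc.2 hb))
    have mass_le_zero : ν.real {a} ≤ 0 :=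
      ge_of_tendsto increment_tendsto (eventually_mem_nhdsWithin.mono mass_le_increment)
    exact (measureReal_eq_zero_iff).1 (mass_le_zero.antisymm measureReal_nonneg)

lemma measure_Icc_eq_zero_of_cdfOf_eq [NullSingletonClass ν] {a b : ℝ} (hab : a ≤ b)
    (h : cdfOf ν a = cdfOf ν b) : ν (Icc a b) = 0 := by
  rw [← measure_congr Ioc_ae_eq_Icc, ← measureReal_eq_zero_iff,
    measureReal_Ioc_eq_cdfOf_sub_cdfOf ν hab, h, sub_self]

lemma measure_cdfOf_preimage_singleton (hν : Continuous (cdfOf ν)) (c : ℝ) :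
    ν (cdfOf ν ⁻¹' {c}) = 0 := by
  have : NullSingletonClass ν := nullSingletonClass_of_continuous_cdfOf hν
  have level_measurable : MeasurableSet (cdfOf ν ⁻¹' {c}) :=
    hν.measurable (measurableSet_singleton c)
  rw [level_measurable.measure_eq_iSup_isCompact]
  simp only [ENNReal.iSup_eq_zero]
  intro K hK hKc
  rcases K.eq_empty_or_nonempty with rfl | hne
  · exact measure_empty
  have inf_level : cdfOf ν (sInf K) = c := hK (hKc.sInf_mem hne)
  have sup_level : cdfOf ν (sSup K) = c := hK (hKc.sSup_mem hne)
  refine measure_mono_null (subset_Icc_csInf_csSup hKc.bddBelow hKc.bddAbove) ?_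
  exact measure_Icc_eq_zero_of_cdfOf_eq (Real.sInf_le_sSup K hKc.bddBelow hKc.bddAbove)
    (inf_level.trans sup_level.symm)

lemma nullSingletonClass_map_cdfOf (hν : Continuous (cdfOf ν)) :
    NullSingletonClass (ν.map (cdfOf ν)) where
  measure_singleton c := by
    rw [Measure.map_apply hν.measurable (measurableSet_singleton c)]
    exact measure_cdfOf_preimage_singleton hν c

end DistributionFunction

section IndicatorCorrelation

variable {Ω : Type*} [MeasurableSpace Ω] {μ : Measure Ω} [IsProbabilityMeasure μ] {A B : Set Ω}

lemma map_indicator_one_eq_bern (hA : MeasurableSet A) :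
    μ.map (A.indicator 1) = bern (μ.real A) := by
  classical
  ext s hs
  have prob_compl : ENNReal.ofReal (1 - μ.real A) = μ Aᶜ := by
    rw [← probReal_compl_eq_one_sub hA, ofReal_measureReal]
  have preimage_eq : A.indicator (1 : Ω → ℝ) ⁻¹' s =
      (if 1 ∈ s then A else ∅) ∪ (if (0 : ℝ) ∈ s then Aᶜ else ∅) :=
    indicator_const_preimage_eq_union A s 1
  rw [Measure.map_apply (measurable_one.indicator hA) hs, bern, ofReal_measureReal, prob_compl,
    preimage_eq]
  by_cases one_mem : (1 : ℝ) ∈ s <;> by_cases zero_mem : (0 : ℝ) ∈ s <;>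
    simp [one_mem, zero_mem, hs, measure_add_measure_compl hA]

lemma variance_indicator_one (hA : MeasurableSet A) :
    variance (A.indicator 1) μ = μ.real A * (1 - μ.real A) := by
  have indicator_memLp : MemLp (A.indicator (1 : Ω → ℝ)) 2 μ := (memLp_const 1).indicator hA
  have indicator_sq : A.indicator (1 : Ω → ℝ) ^ 2 = A.indicator 1 := by
    rw [sq, ← inter_indicator_one, inter_self]
  rw [variance_eq_sub indicator_memLp, indicator_sq, integral_indicator_one hA]
  ring

lemma pearson_indicator_one (hA : MeasurableSet A) (hB : MeasurableSet B) :
    pearson μ (A.indicator 1) (B.indicator 1) =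
      (μ.real (A ∩ B) - μ.real A * μ.real B) /
        √((μ.real A * (1 - μ.real A)) * (μ.real B * (1 - μ.real B))) := by
  have integral_mul : ∫ ω, A.indicator (1 : Ω → ℝ) ω * B.indicator (1 : Ω → ℝ) ω ∂μ =
      μ.real (A ∩ B) := by
    rw [← integral_indicator_one (hA.inter hB), inter_indicator_one]
    rfl
  rw [pearson, integral_mul, integral_indicator_one hA, integral_indicator_one hB,
    variance_indicator_one hA, variance_indicator_one hB]

lemma pearson_indicator_one_of_measureReal_eq_half (hA : MeasurableSet A) (hB : MeasurableSet B)
    (hA_half : μ.real A = 1 / 2) (hB_half : μ.real B = 1 / 2) :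
    pearson μ (A.indicator 1) (B.indicator 1) = 4 * μ.real (A ∩ B) - 1 := by
  rw [pearson_indicator_one hA hB, hA_half, hB_half, Real.sqrt_mul_self (by norm_num)]
  ring

end IndicatorCorrelation

section CorrelationMatrices

variable {Ω Ω' : Type*} [MeasurableSpace Ω] [MeasurableSpace Ω']

lemma pearson_map {μ : Measure Ω} {X : Ω → Ω'} (hX : AEMeasurable X μ) {Y₁ Y₂ : Ω' → ℝ}
    (hY₁ : Measurable Y₁) (hY₂ : Measurable Y₂) :
    pearson (μ.map X) Y₁ Y₂ = pearson μ (Y₁ ∘ X) (Y₂ ∘ X) := by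
  rw [pearson, integral_map hX (by fun_prop),
    integral_map hX hY₁.aestronglyMeasurable, integral_map hX hY₂.aestronglyMeasurable,
    variance_map hY₁.aemeasurable hX, variance_map hY₂.aemeasurable hX]
  rfl

lemma pearson_mem_corrSet {d : ℕ} {μ : Measure Ω} [IsProbabilityMeasure μ] {ν : Measure ℝ}
    {Y : Fin d → Ω → ℝ} (hY : ∀ j, Measurable (Y j)) (hY_law : ∀ j, μ.map (Y j) = ν) :
    (fun i j => pearson μ (Y i) (Y j)) ∈ corrSet ν d := by
  have vector_measurable : Measurable fun ω j => Y j ω := measurable_pi_lambda _ hY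
  refine ⟨μ.map fun ω j => Y j ω,
    Measure.isProbabilityMeasure_map vector_measurable.aemeasurable, fun j => ?_, fun i j => ?_⟩
  · rw [Measure.map_map (measurable_pi_apply j) vector_measurable]
    exact hY_law j
  · exact (pearson_map vector_measurable.aemeasurable
      (measurable_pi_apply i) (measurable_pi_apply j)).symm

end CorrelationMatrices

/-- The event `f(ω) ≤ f(ω̃)` on the space of pairs `(ω, ω̃)`; under `μ.prod μ` it compares `f` with
an independent copy of itself. For `f` valued in a product the comparison is componentwise. -/
def leEvent {Ω α : Type*} [LE α] (f : Ω → α) : Set (Ω × Ω) := {ω | f ω.1 ≤ f ω.2}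

section IndependentCopies

lemma leEvent_inter_leEvent {Ω α β : Type*} [LE α] [LE β] (f : Ω → α) (g : Ω → β) :
    leEvent f ∩ leEvent g = leEvent fun x => (f x, g x) :=
  rfl

lemma measure_prod_diagonal {α : Type*} [MeasurableSpace α] [MeasurableEq α] (μ ν : Measure α)
    [SFinite ν] [NullSingletonClass ν] : (μ.prod ν) (diagonal α) = 0 := by
  rw [Measure.measure_prod_null measurableSet_diagonal]
  exact Filter.Eventually.of_forall fun x =>
    measure_mono_null (fun _ hy => Eq.symm hy) (measure_singleton x)

variable {Ω α : Type*} [MeasurableSpace Ω] [TopologicalSpace α] [SecondCountableTopology α]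
  [MeasurableSpace α] [OpensMeasurableSpace α] {f : Ω → α}

section PartialOrder

variable [PartialOrder α] [OrderClosedTopology α]

lemma measurableSet_leEvent (hf : Measurable f) : MeasurableSet (leEvent f) :=
  measurableSet_le (hf.comp measurable_fst) (hf.comp measurable_snd)

lemma measure_prod_leEvent (μ : Measure Ω) [SFinite μ] (hf : Measurable f) :
    (μ.prod μ) (leEvent f) = ((μ.map f).prod (μ.map f)) (leEvent id) := by
  rw [Measure.map_prod_map μ μ hf hf,
    Measure.map_apply (hf.prodMap hf) (measurableSet_leEvent measurable_id)]
  rfl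

lemma measureReal_prod_leEvent_eq_integral (μ : Measure Ω) [IsFiniteMeasure μ] (hf : Measurable f) :
    (μ.prod μ).real (leEvent f) = ∫ y, (μ.map f).real (Iic y) ∂(μ.map f) := by
  have le_measurable : MeasurableSet (leEvent (id : α → α)) := measurableSet_leEvent measurable_id
  rw [measureReal_def, measure_prod_leEvent μ hf, Measure.prod_apply_symm le_measurable]
  exact (integral_toReal (measurable_measure_prodMk_right le_measurable).aemeasurable
    (Filter.Eventually.of_forall fun _ => measure_lt_top _ _)).symm

end PartialOrder

lemma measureReal_prod_leEvent_eq_half [LinearOrder α] [OrderClosedTopology α] (μ : Measure Ω)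
    [IsProbabilityMeasure μ] (hf : Measurable f) [NullSingletonClass (μ.map f)] :
    (μ.prod μ).real (leEvent f) = 1 / 2 := by
  have : IsProbabilityMeasure (μ.map f) := Measure.isProbabilityMeasure_map hf.aemeasurable
  set π := (μ.map f).prod (μ.map f)
  set L : Set (α × α) := leEvent id
  have L_measurable : MeasurableSet L := measurableSet_leEvent measurable_id
  have swap_real : π.real (Prod.swap ⁻¹' L) = π.real L := by
    rw [← map_measureReal_apply measurable_swap L_measurable, Measure.prod_swap]
  have ties_null : π.real (Prod.swap ⁻¹' L ∩ L) = 0 :=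
    (measureReal_eq_zero_iff).2 <|
      measure_mono_null (fun q hq => le_antisymm hq.2 hq.1) (measure_prod_diagonal _ _)
  have total : Prod.swap ⁻¹' L ∪ L = univ := eq_univ_of_forall fun q => le_total q.2 q.1
  have inclusion_exclusion :=
    measureReal_union_add_inter (μ := π) (s := Prod.swap ⁻¹' L) L_measurable
  rw [ties_null, total, swap_real, probReal_univ] at inclusion_exclusion
  rw [measureReal_def, measure_prod_leEvent μ hf, ← measureReal_def]
  linarith

end IndependentCopies

section KendallIndicators

variable {d : ℕ} (μ : Measure (Fin d → ℝ)) (i j : Fin d)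

/-- The component `U_j = F_j(X_j)`, as a function on the sample space of `X ~ μ`. -/
def copulaCoord (x : Fin d → ℝ) : ℝ := marginCDF d μ j (x j)

lemma kendallInd_eq_indicator_leEvent :
    kendallInd d μ j = (leEvent (copulaCoord μ j)).indicator 1 :=
  rfl

lemma cdf2_eq_measureReal_Iic (π : Measure (ℝ × ℝ)) (p : ℝ × ℝ) :
    cdf2 π p.1 p.2 = π.real (Iic p) := by
  rw [cdf2, Iic_prod_Iic, measureReal_def]

variable [IsFiniteMeasure μ]

lemma measurable_copulaCoord : Measurable (copulaCoord μ j) :=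
  (monotone_cdfOf _).measurable.comp (measurable_pi_apply j)

lemma measurableSet_leEvent_copulaCoord : MeasurableSet (leEvent (copulaCoord μ j)) :=
  measurableSet_leEvent (measurable_copulaCoord μ j)

lemma measurable_kendallInd : Measurable (kendallInd d μ j) :=
  measurable_one.indicator (measurableSet_leEvent_copulaCoord μ j)

lemma measureReal_leEvent_inter_eq_integral_cdf2 :
    (μ.prod μ).real (leEvent (copulaCoord μ i) ∩ leEvent (copulaCoord μ j)) =
      ∫ p, cdf2 (pairCopula d μ i j) p.1 p.2 ∂(pairCopula d μ i j) := by
  simp only [cdf2_eq_measureReal_Iic]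
  rw [leEvent_inter_leEvent, measureReal_prod_leEvent_eq_integral μ
    ((measurable_copulaCoord μ i).prodMk (measurable_copulaCoord μ j))]
  rfl

variable {i j}

lemma nullSingletonClass_map_copulaCoord (hj : Continuous (marginCDF d μ j)) :
    NullSingletonClass (μ.map (copulaCoord μ j)) := by
  have law_eq : μ.map (copulaCoord μ j) = (μ.map fun x => x j).map (marginCDF d μ j) :=
    (Measure.map_map hj.measurable (measurable_pi_apply j)).symm
  rw [law_eq]
  exact nullSingletonClass_map_cdfOf hj

end KendallIndicators

section KendallCorrelation

variable {d : ℕ} (μ : Measure (Fin d → ℝ)) [IsProbabilityMeasure μ] {i j : Fin d}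

lemma measureReal_leEvent_copulaCoord_eq_half (hj : Continuous (marginCDF d μ j)) :
    (μ.prod μ).real (leEvent (copulaCoord μ j)) = 1 / 2 :=
  have := nullSingletonClass_map_copulaCoord μ hj
  measureReal_prod_leEvent_eq_half μ (measurable_copulaCoord μ j)

lemma map_kendallInd_eq_bern_half (hj : Continuous (marginCDF d μ j)) :
    (μ.prod μ).map (kendallInd d μ j) = bern (1 / 2) := by
  rw [kendallInd_eq_indicator_leEvent,
    map_indicator_one_eq_bern (measurableSet_leEvent_copulaCoord μ j),
    measureReal_leEvent_copulaCoord_eq_half μ hj]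

lemma pearson_kendallInd_eq_kendallTau (hi : Continuous (marginCDF d μ i))
    (hj : Continuous (marginCDF d μ j)) :
    pearson (μ.prod μ) (kendallInd d μ i) (kendallInd d μ j) = kendallTau d μ i j := by
  rw [kendallTau, ← measureReal_leEvent_inter_eq_integral_cdf2]
  exact pearson_indicator_one_of_measureReal_eq_half
    (measurableSet_leEvent_copulaCoord μ i) (measurableSet_leEvent_copulaCoord μ j)
    (measureReal_leEvent_copulaCoord_eq_half μ hi) (measureReal_leEvent_copulaCoord_eq_half μ hj)

end KendallCorrelation

/-- with `Ũ` an independent copy and `B_j = 1{U_j ≤ Ũ_j}`, each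
`B_j ~ Bern(1/2)` and `ρ(B_i, B_j) = τ(X_i, X_j)`; consequently every matrix of
pairwise Kendall's taus of a continuous random vector is a correlation matrix of a
random vector with `Bern(1/2)` margins: `T_d ⊆ P^B_d(1/2)`. -/
theorem kendall_tau_matrices_subset_bernoulli_corr_matrices (d : ℕ) :
    (∀ μ : Measure (Fin d → ℝ), IsProbabilityMeasure μ →
      (∀ j, Continuous (marginCDF d μ j)) →
      (∀ j : Fin d, (μ.prod μ).map (kendallInd d μ j) = bern (1/2)) ∧
      (∀ i j : Fin d,
        pearson (μ.prod μ) (kendallInd d μ i) (kendallInd d μ j) = kendallTau d μ i j)) ∧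
    (∀ P : Matrix (Fin d) (Fin d) ℝ,
      (∃ μ : Measure (Fin d → ℝ), IsProbabilityMeasure μ ∧
        (∀ j, Continuous (marginCDF d μ j)) ∧
        (∀ i j, P i j = kendallTau d μ i j)) →
      P ∈ PBd d) := by
  refine ⟨fun μ _ hc => ⟨fun j => map_kendallInd_eq_bern_half μ (hc j),
    fun i j => pearson_kendallInd_eq_kendallTau μ (hc i) (hc j)⟩, ?_⟩
  rintro P ⟨μ, _, hc, hP⟩
  have P_eq_pearson :
      P = fun i j => pearson (μ.prod μ) (kendallInd d μ i) (kendallInd d μ j) := by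
    ext i j
    rw [hP, pearson_kendallInd_eq_kendallTau μ (hc i) (hc j)]
  rw [P_eq_pearson]
  exact pearson_mem_corrSet (fun j => measurable_kendallInd μ j)
    fun j => map_kendallInd_eq_bern_half μ (hc j)
end
end
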